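/- Let f : ℝⁿ → ℝ be differentiable and strongly convex with constant μ > 0. Let x ∈ ℝⁿ with ∇f(x) ≠ 0. Then there exists one and only one t > 0 such that f(x - t•∇f(x)) = f(x). -/

import Mathlib

/-!
Restricted to a descent ray, a strongly convex function is strictly convex, tends to infinity and
dips below its initial value. It is continuous beyond the starting point, so by the intermediate
value theorem it climbs back to the initial value. It cannot do so twice: by strict convexity, at
the first return it would lie strictly below the value shared by the start and the second return.
-/

open Filter Set

section OrderedField

variable {𝕜 : Type*} [Field 𝕜] [LinearOrder 𝕜] [IsStrictOrderedRing 𝕜] {S : Set 𝕜} {g : 𝕜 → 𝕜}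
  {a b c : 𝕜}

lemma map_add_slope_mul_le_of_convexOn (hg : ConvexOn 𝕜 S g) (ha : a ∈ S) (hc : c ∈ S)
    (hab : a < b) (hbc : b < c) : g b + slope g a b * (c - b) ≤ g c := by
  have hslope := hg.slope_mono_adjacent ha hc hab hbc
  rw [le_div_iff₀ (sub_pos.2 hbc), ← slope_def_field] at hslope
  linarith

lemma eq_of_strictConvexOn_of_map_eq (hg : StrictConvexOn 𝕜 S g) (ha : a ∈ S) (hb : b ∈ S)
    (hc : c ∈ S) (hab : a < b) (hac : a < c) (hgb : g b = g a) (hgc : g c = g a) : b = c := by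
  wlog hbc : b ≤ c generalizing b c
  · exact (this hc hb hac hab hgc hgb (le_of_not_ge hbc)).symm
  by_contra hne
  have hmem : b ∈ openSegment 𝕜 a c := by
    rw [openSegment_eq_Ioo hac]
    exact ⟨hab, hbc.lt_of_ne hne⟩
  have hlt := hg.lt_on_openSegment ha hc hac.ne hmem
  rw [hgb, hgc, max_self] at hlt
  exact hlt.false

end OrderedField

section RealLine

variable {g : ℝ → ℝ} {g' a m : ℝ}

lemma exists_gt_map_lt_of_hasDerivWithinAt_neg (hg : HasDerivWithinAt g g' (Ici a) a)
    (hg' : g' < 0) : ∃ t > a, g t < g a := by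
  obtain ⟨t, hslope, hat⟩ := (hg.liminf_right_slope_le hg').and_eventually
    self_mem_nhdsWithin |>.exists
  exact ⟨t, hat, (slope_neg_iff_of_le (le_of_lt hat)).1 hslope⟩

lemma tendsto_atTop_of_strongConvexOn_Ici (hg : StrongConvexOn (Ici a) m g) (hm : 0 < m) :
    Tendsto g atTop atTop := by
  set h : ℝ → ℝ := fun t ↦ g t - m / 2 * ‖t‖ ^ 2
  have h_convex : ConvexOn ℝ (Ici a) h := strongConvexOn_iff_convex.1 hg
  set b := a + 1
  set c := slope h a b
  have quadratic_tendsto : Tendsto (fun t ↦ t * (m / 2 * t + c) + (h b - c * b)) atTop atTop :=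
    tendsto_atTop_add_const_right _ _ <| tendsto_id.atTop_mul_atTop₀ <|
      tendsto_atTop_add_const_right _ _ <| tendsto_id.const_mul_atTop (half_pos hm)
  refine tendsto_atTop_mono' _ ?_ quadratic_tendsto
  filter_upwards [eventually_gt_atTop b] with t hbt
  have h_minorant := map_add_slope_mul_le_of_convexOn h_convex self_mem_Ici
    ((lt_add_one a).trans hbt).le (lt_add_one a) hbt
  have h_eq : h t = g t - m / 2 * t ^ 2 := by simp only [h, Real.norm_eq_abs, sq_abs]
  linarith

lemma existsUnique_gt_map_eq_of_strictConvexOn_Ici (hg : StrictConvexOn ℝ (Ici a) g)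
    (htop : Tendsto g atTop atTop) (hderiv : HasDerivWithinAt g g' (Ici a) a) (hg' : g' < 0) :
    ∃! t, a < t ∧ g t = g a := by
  obtain ⟨l, hal, hl⟩ := exists_gt_map_lt_of_hasDerivWithinAt_neg hderiv hg'
  obtain ⟨r, hr, hlr⟩ := ((htop.eventually_ge_atTop (g a)).and (eventually_ge_atTop l)).exists
  have hcont : ContinuousOn g (Icc l r) := by
    refine hg.convexOn.continuousOn_interior.mono fun t ht ↦ ?_
    rw [interior_Ici]
    exact hal.trans_le ht.1
  obtain ⟨t, ht, hgt⟩ := intermediate_value_Icc hlr hcont ⟨hl.le, hr⟩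
  have hat : a < t := hal.trans_le ht.1
  refine ⟨t, ⟨hat, hgt⟩, fun u ⟨hau, hgu⟩ ↦ ?_⟩
  exact eq_of_strictConvexOn_of_map_eq hg self_mem_Ici hau.le hat.le hau hat hgu hgt

end RealLine

section NormedSpace

variable {E : Type*} [NormedAddCommGroup E] [NormedSpace ℝ E] {f : E → ℝ} {s : Set E}
  {m f' : ℝ} {x v : E}

lemma strongConvexOn_univ_of_forall_mem_Icc
    (hf : ∀ y z : E, ∀ t : ℝ, t ∈ Icc (0 : ℝ) 1 →
      f (t • y + (1 - t) • z) ≤ t * f y + (1 - t) * f z - (m / 2) * t * (1 - t) * ‖y - z‖ ^ 2) :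
    StrongConvexOn univ m f := by
  refine ⟨convex_univ, fun y _ z _ a b ha hb hab ↦ ?_⟩
  obtain rfl := eq_sub_of_add_eq' hab
  exact (hf y z a ⟨ha, sub_nonneg.1 hb⟩).trans_eq (by simp only [smul_eq_mul]; ring)

lemma strongConvexOn_comp_add_smul (hf : StrongConvexOn s m f) {I : Set ℝ} (hI : Convex ℝ I)
    (hIs : MapsTo (fun t : ℝ ↦ x + t • v) I s) :
    StrongConvexOn I (m * ‖v‖ ^ 2) fun t ↦ f (x + t • v) := by
  refine ⟨hI, fun p hp q hq a b ha hb hab ↦ ?_⟩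
  have hcomb : a • (x + p • v) + b • (x + q • v) = x + (a • p + b • q) • v := by
    obtain rfl := eq_sub_of_add_eq hab
    module
  have hnorm : ‖x + p • v - (x + q • v)‖ = ‖p - q‖ * ‖v‖ := by
    rw [add_sub_add_left_eq_sub, ← sub_smul, norm_smul]
  have hle := hf.2 (hIs hp) (hIs hq) ha hb hab
  rw [hcomb, hnorm] at hle
  exact hle.trans_eq (by ring)

lemma existsUnique_pos_map_add_smul_eq (hf : StrongConvexOn s m f) (hm : 0 < m)
    (hray : MapsTo (fun t : ℝ ↦ x + t • v) (Ici 0) s) (hderiv : HasLineDerivWithinAt ℝ f f' s x v)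
    (hf' : f' < 0) : ∃! t : ℝ, 0 < t ∧ f (x + t • v) = f x := by
  have hderiv_ray : HasDerivWithinAt (fun t : ℝ ↦ f (x + t • v)) f' (Ici 0) 0 :=
    HasDerivWithinAt.mono hderiv hray
  have hv : v ≠ 0 := by
    rintro rfl
    obtain ⟨t, -, ht⟩ := exists_gt_map_lt_of_hasDerivWithinAt_neg hderiv_ray hf'
    simp at ht
  have hm_ray : 0 < m * ‖v‖ ^ 2 := by positivity
  have hconv := strongConvexOn_comp_add_smul hf (convex_Ici 0) hray
  simpa using existsUnique_gt_map_eq_of_strictConvexOn_Ici (hconv.strictConvexOn hm_ray)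
    (tendsto_atTop_of_strongConvexOn_Ici hconv hm_ray) hderiv_ray hf'

end NormedSpace

theorem exists_unique_pos_step_same_level_general {E : Type*} [NormedAddCommGroup E]
    [InnerProductSpace ℝ E] [CompleteSpace E] {f : E → ℝ} {m : ℝ} {x v : E}
    (hf : StrongConvexOn univ m f) (hm : 0 < m) (hgrad : HasGradientAt f v x) (hv : v ≠ 0) :
    ∃! t : ℝ, 0 < t ∧ f (x - t • v) = f x := by
  have hderiv : HasLineDerivWithinAt ℝ f (-‖v‖ ^ 2) univ x (-v) := by
    simpa using hgrad.hasFDerivAt.hasLineDerivAt (-v)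
  have hneg : -‖v‖ ^ 2 < 0 := neg_neg_of_pos (by positivity)
  simpa [sub_eq_add_neg] using
    existsUnique_pos_map_add_smul_eq hf hm (mapsTo_univ _ _) hderiv hneg

/-- For a differentiable strongly convex function and a non-stationary
point `x`, there is exactly one `t > 0` with `f (x - t • ∇f x) = f x`. -/
theorem exists_unique_pos_step_same_level
    {n : ℕ} (f : EuclideanSpace ℝ (Fin n) → ℝ) (μ : ℝ) (hμ : 0 < μ)
    (hdiff : Differentiable ℝ f)
    (hsc : ∀ x y : EuclideanSpace ℝ (Fin n), ∀ t : ℝ, t ∈ Set.Icc (0:ℝ) 1 →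
      f (t • x + (1 - t) • y) ≤ t * f x + (1 - t) * f y - (μ / 2) * t * (1 - t) * ‖x - y‖ ^ 2)
    (x : EuclideanSpace ℝ (Fin n)) (hx : gradient f x ≠ 0) :
    ∃! t : ℝ, 0 < t ∧ f (x - t • gradient f x) = f x :=
  exists_unique_pos_step_same_level_general (strongConvexOn_univ_of_forall_mem_Icc hsc) hμ
    (hdiff x).hasGradientAt hx
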